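/- arXiv:2112.15101 — 4 statements merged into one kernel-verified Lean document; each statement's English description precedes it below -/
import Mathlib

section
/- Let m ≥ 2 be an integer and B > 0. There is a constant C, depending only on m and B, such that for every real 2m×m matrix J with operator norm ‖J‖ ≤ B, every u ∈ ℝ^{2m}, every 1 ≤ i ≤ m, every x ∈ ℝ^{2m}, every t > 0, and all p, p' ∈ ℝ^m with |p' − p| < 2^{m+3} t, one has |(1+|u|^{4m})^{−1} (∂^0_i ∂^1_i g)_t(x − Jp + ut)| ≤ C t^{−2m} ∑_{n≥0} 2^{−4nm} χ(|x − Jp'| ≤ 2^n t), where χ(𝒜) equals 1 if the condition 𝒜 holds and 0 otherwise. -/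
open MeasureTheory Matrix
open scoped ENNReal NNReal BigOperators

noncomputable section

namespace SBL

/-- The set of corners of the `m`-dimensional cube: functions `{1,…,m} → {0,1}`. -/
abbrev Corner (m : ℕ) := Fin m → Fin 2

/-- Index type for `ℝ^{2m}`: coordinates `x^0_i` (left) and `x^1_i` (right). -/
abbrev Idx (m : ℕ) := Fin m ⊕ Fin m

/-- The coordinate of `ℝ^{2m}` selected by the corner `j` at position `i`. -/
def sel {m : ℕ} (j : Corner m) (i : Fin m) : Idx m :=
  if j i = 0 then Sum.inl i else Sum.inr i

/-- The projection `Π_j : ℝ^{2m} → ℝ^m`, `Π_j x = (x_1^{j(1)},…,x_m^{j(m)})`. -/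
def proj {m : ℕ} (j : Corner m) (x : Idx m → ℝ) : Fin m → ℝ := fun i => x (sel j i)

/-- The projection `Π_j` as an `m × 2m` matrix. -/
def projM {m : ℕ} (j : Corner m) : Matrix (Fin m) (Idx m) ℝ :=
  Matrix.of fun i k => if k = sel j i then 1 else 0

/-- `A_j := Π_j J`, the `m × m` matrix obtained by applying `Π_j` to (the columns of) a
`2m × m` matrix `J`, i.e. selecting rows of `J` according to the corner `j`. -/
def Amat {m : ℕ} (J : Matrix (Idx m) (Fin m) ℝ) (j : Corner m) : Matrix (Fin m) (Fin m) ℝ :=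
  Matrix.of fun i k => J (sel j i) k

/-- Euclidean norm on a finite pi type. -/
def en {ι : Type*} [Fintype ι] (x : ι → ℝ) : ℝ := Real.sqrt (∑ i, (x i) ^ 2)

/-- Operator norm of a matrix with respect to the Euclidean norms. -/
def opNorm {ι κ : Type*} [Fintype ι] [Fintype κ] [DecidableEq κ] (A : Matrix ι κ ℝ) : ℝ :=
  ‖LinearMap.toContinuousLinearMap (Matrix.toEuclideanLin A)‖

/-- `Δ`-regularity of a square matrix: `max(‖A‖, |det A|⁻¹) ≤ Δ` (in particular `det A ≠ 0`). -/
def IsReg {m : ℕ} (Δ : ℝ) (A : Matrix (Fin m) (Fin m) ℝ) : Prop :=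
  opNorm A ≤ Δ ∧ A.det ≠ 0 ∧ |A.det|⁻¹ ≤ Δ

/-- A Calderón–Zygmund kernel of order `n` in `ℝ^m`, given by its multiplier `K̂` on
`ℝ^m ∖ {0}`: it is `n` times continuously differentiable there and satisfies the symbol
estimates `‖D^k K̂(η)‖ ≤ |η|^{-k}` for all `k ≤ n`. -/
def IsCZ {m : ℕ} (n : ℕ) (Khat : (Fin m → ℝ) → ℂ) : Prop :=
  ContDiffOn ℝ n Khat {0}ᶜ ∧
  ∀ k : ℕ, k ≤ n → ∀ η : Fin m → ℝ, η ≠ 0 →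
    ‖iteratedFDerivWithin ℝ k Khat {0}ᶜ η‖ ≤ (en η) ^ (-(k : ℝ))

/-- Fourier transform of a (nice) function on `ℝ^{2m}`. -/
def fourierT {m : ℕ} (φ : (Idx m → ℝ) → ℝ) (ξ : Idx m → ℝ) : ℂ :=
  ∫ x : Idx m → ℝ, Complex.exp (-2 * Real.pi * Complex.I * (∑ k, x k * ξ k)) * (φ x : ℂ)

/-- The principal value `p.v. ∫_{ℝ^{2m}} (∏_j F_j(Π_j x)) K(Πx) dx`, defined as
`∫_{ℝ^m} φ̂(−Π^T η) K̂(η) dη` with `φ = ∏_j F_j ∘ Π_j`. -/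
def pv {m : ℕ} (P : Matrix (Fin m) (Idx m) ℝ) (Khat : (Fin m → ℝ) → ℂ)
    (F : Corner m → (Fin m → ℝ) → ℝ) : ℂ :=
  ∫ η : Fin m → ℝ, fourierT (fun x => ∏ j, F j (proj j x)) (-(P.transpose.mulVec η)) * Khat η

/-- Upper `m×m` block `J^0` of a `2m×m` matrix. -/
def Jb0 {m : ℕ} (J : Matrix (Idx m) (Fin m) ℝ) : Matrix (Fin m) (Fin m) ℝ :=
  J.submatrix Sum.inl id

/-- Lower `m×m` block `J^1` of a `2m×m` matrix. -/
def Jb1 {m : ℕ} (J : Matrix (Idx m) (Fin m) ℝ) : Matrix (Fin m) (Fin m) ℝ :=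
  J.submatrix Sum.inr id

/-- `Π^J := (I, −J^0 (J^1)⁻¹)`. -/
def PiJ {m : ℕ} (J : Matrix (Idx m) (Fin m) ℝ) : Matrix (Fin m) (Idx m) ℝ :=
  Matrix.fromCols 1 (-(Jb0 J * (Jb1 J)⁻¹))

/-- The dyadic cube with parameters `Q = (k, n)`: `∏_i [2^k n_i, 2^k (n_i+1))`. -/
def dC {m : ℕ} (Q : ℤ × (Fin m → ℤ)) : Set (Fin m → ℝ) :=
  {x | ∀ i, (2:ℝ)^Q.1 * (Q.2 i : ℝ) ≤ x i ∧ x i < (2:ℝ)^Q.1 * ((Q.2 i : ℝ) + 1)}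

/-- `Q*`: the cube with the same center as `Q` and three times the side length. -/
def dCstar {m : ℕ} (Q : ℤ × (Fin m → ℤ)) : Set (Fin m → ℝ) :=
  {x | ∀ i, (2:ℝ)^Q.1 * ((Q.2 i : ℝ) - 1) ≤ x i ∧ x i < (2:ℝ)^Q.1 * ((Q.2 i : ℝ) + 2)}

/-- A (1/2-)sparse collection of dyadic cubes. -/
def IsSparse {m : ℕ} (S : Set (ℤ × (Fin m → ℤ))) : Prop :=
  ∀ Q ∈ S,
    (∑' Q' : {q : ℤ × (Fin m → ℤ) // q ∈ S ∧ dC q ⊆ dC Q}, volume (dC Q'.val)) ≤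
      2 * volume (dC Q)

/-- The average `[F]_S := (|S|⁻¹ ∫_S |F|^{2^{m-1}})^{2^{1-m}}`. -/
def avg {m : ℕ} (S : Set (Fin m → ℝ)) (F : (Fin m → ℝ) → ℝ) : ℝ :=
  (((volume S).toReal)⁻¹ * ∫ x in S, |F x| ^ (2^(m-1) : ℕ)) ^ ((2:ℝ) ^ ((1:ℤ) - (m:ℤ)))

/-- The closed axis-parallel box `∏_i [a_i, b_i]`. -/
def box {m : ℕ} (a b : Fin m → ℝ) : Set (Fin m → ℝ) := {x | ∀ i, a i ≤ x i ∧ x i ≤ b i}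

/-- Reciprocal eccentricity `ε_R = (min_i |I_i|)/(max_i |I_i|)` of the box `∏_i [a_i,b_i]`. -/
def ecc {m : ℕ} (a b : Fin m → ℝ) : ℝ := (⨅ i, (b i - a i)) / (⨆ i, (b i - a i))

/-- Modified strong maximal function evaluated on a set `S`:
`sup { (ε_R^α)^{2^{1-m}} [F]_R : R ∈ ℛ, S ⊆ R }` (as an extended real). -/
def Mal {m : ℕ} (α : ℝ) (F : (Fin m → ℝ) → ℝ) (S : Set (Fin m → ℝ)) : ℝ≥0∞ :=
  ⨆ (a : Fin m → ℝ) (b : Fin m → ℝ) (_ : ∀ i, a i < b i) (_ : S ⊆ box a b),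
    ENNReal.ofReal ((ecc a b ^ α) ^ ((2:ℝ) ^ ((1:ℤ) - (m:ℤ))) * avg (box a b) F)

/-- `M_α(F)(A𝒯) := sup_{Q ∈ 𝒯} M_α(F)(AQ)`. -/
def MalTree {m : ℕ} (α : ℝ) (F : (Fin m → ℝ) → ℝ) (A : Matrix (Fin m) (Fin m) ℝ)
    (T : Set (ℤ × (Fin m → ℤ))) : ℝ≥0∞ :=
  ⨆ Q ∈ T, Mal α F (A.mulVec '' dC Q)

/-- A convex tree of dyadic cubes with top cube `Qt`. -/
def ConvexTree {m : ℕ} (T : Set (ℤ × (Fin m → ℤ))) (Qt : ℤ × (Fin m → ℤ)) : Prop :=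
  Qt ∈ T ∧ (∀ Q ∈ T, dC Q ⊆ dC Qt) ∧
  ∀ Q ∈ T, ∀ Q' : ℤ × (Fin m → ℤ), dC Q ⊆ dC Q' → dC Q' ⊆ dC Qt → Q' ∈ T

/-- The Gaussian `g(x) = e^{−π|x|²}` on `ℝ^{2m}`. -/
def gss {m : ℕ} (x : Idx m → ℝ) : ℝ := Real.exp (-Real.pi * ∑ k, (x k) ^ 2)

/-- The mixed partial derivative `∂^0_i ∂^1_i g`. -/
def ddg {m : ℕ} (i : Fin m) (x : Idx m → ℝ) : ℝ :=
  fderiv ℝ (fun y : Idx m → ℝ => fderiv ℝ gss y (Pi.single (Sum.inl i) (1:ℝ))) x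
    (Pi.single (Sum.inr i) (1:ℝ))

/-- Isotropic `L¹` dilation on `ℝ^{2m}`: `φ_t(x) = t^{-2m} φ(t⁻¹ x)`. -/
def dil {m : ℕ} (t : ℝ) (φ : (Idx m → ℝ) → ℝ) (x : Idx m → ℝ) : ℝ :=
  (t ^ (2*m))⁻¹ * φ (t⁻¹ • x)

/-- Matrix dilation: `φ_D(x) = (det D)⁻¹ φ(D⁻¹ x)`. -/
def dilM {m : ℕ} (D : Matrix (Idx m) (Idx m) ℝ) (φ : (Idx m → ℝ) → ℝ) (x : Idx m → ℝ) : ℝ :=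
  (D.det)⁻¹ * φ (D⁻¹.mulVec x)

/-- The region `Ω_𝒯 = ∪_{Q∈𝒯} Q × (ℓ(Q)/2, ℓ(Q))` in the upper half space. -/
def Omega {m : ℕ} (T : Set (ℤ × (Fin m → ℤ))) : Set ((Fin m → ℝ) × ℝ) :=
  ⋃ Q ∈ T, (dC Q) ×ˢ Set.Ioo ((2:ℝ)^Q.1 / 2) ((2:ℝ)^Q.1)

/-- The localized form `Λ_𝒯((F_j)_j)`. -/
def LambdaT {m : ℕ} (J : Matrix (Idx m) (Fin m) ℝ) (T : Set (ℤ × (Fin m → ℤ)))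
    (c : ℝ → ℂ) (u : Idx m → ℝ) (i : Fin m) (F : Corner m → (Fin m → ℝ) → ℝ) : ℂ :=
  ∫ z in Omega T, c z.2 * Complex.ofReal ((1 + en u ^ (4*m))⁻¹ * (z.2)⁻¹ *
    ∫ x : Idx m → ℝ, (∏ j, F j (proj j x)) * dil z.2 (ddg i) (x - J.mulVec z.1 + z.2 • u))

/-- `T_k := ∪ {Q ∈ 𝒯 : ℓ(Q) = 2^k}`. -/
def Tkset {m : ℕ} (T : Set (ℤ × (Fin m → ℤ))) (k : ℤ) : Set (Fin m → ℝ) :=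
  ⋃ Q ∈ {q ∈ T | q.1 = k}, dC Q

/-- The form `Λ̃_𝒯((F_j)_j)` with localization in the `x` variables. -/
def LambdaTilde {m : ℕ} (J : Matrix (Idx m) (Fin m) ℝ) (T : Set (ℤ × (Fin m → ℤ)))
    (c : ℝ → ℂ) (u : Idx m → ℝ) (i : Fin m) (F : Corner m → (Fin m → ℝ) → ℝ) : ℂ :=
  ∑' k : ℤ, ∫ t in Set.Ioc ((2:ℝ)^(k-1)) ((2:ℝ)^k),
    c t * Complex.ofReal ((1 + en u ^ (4*m))⁻¹ * t⁻¹ *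
      ∫ p : Fin m → ℝ, ∫ x : Idx m → ℝ,
        (∏ j, Set.indicator ((Amat J j).mulVec '' Tkset T k) (F j) (proj j x)) *
          dil t (ddg i) (x - J.mulVec p + t • u))

/-- The form `Λ(𝒯,J,K)((F_j)_j)` from the induction proposition. -/
def LambdaK {m : ℕ} (J : Matrix (Idx m) (Fin m) ℝ) (T : Set (ℤ × (Fin m → ℤ)))
    (K : ℝ → (Idx m → ℝ) → ℂ) (F : Corner m → (Fin m → ℝ) → ℝ) : ℂ :=
  ∑' k : ℤ, ∫ x : Idx m → ℝ,
    Complex.ofReal (∏ j, Set.indicator ((Amat J j).mulVec '' Tkset T k) (F j) (proj j x)) *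
      ∫ t in Set.Ioc ((2:ℝ)^(k-1)) ((2:ℝ)^k), K t x * (t : ℂ)⁻¹

/-- The reflected corner `i∗j`, differing from `j` exactly at position `i`. -/
def istar {m : ℕ} (i : Fin m) (j : Corner m) : Corner m :=
  fun k => if k = i then 1 - j i else j k

/-- The diagonal matrix `Θ̃` with entry 0 at positions `i ≤ l` and 1 at positions `i > l`
(1-based), i.e. 0 for `i < l` and 1 otherwise in 0-based indexing. -/
def Th {m : ℕ} (l : ℕ) : Matrix (Fin m) (Fin m) ℝ :=
  Matrix.diagonal fun i => if (i : ℕ) < l then 0 else 1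

/-- The block diagonal matrix `Θ = diag(Θ̃, Θ̃)`. -/
def ThB {m : ℕ} (l : ℕ) : Matrix (Idx m) (Idx m) ℝ :=
  Matrix.diagonal (Sum.elim (fun i : Fin m => if (i:ℕ) < l then (0:ℝ) else 1)
    (fun i : Fin m => if (i:ℕ) < l then (0:ℝ) else 1))

end SBL

namespace SBL

/-!
`∂⁰ᵢ∂¹ᵢg` decays faster than every power of `1 + |·|`. Rescaling by `t`, it is evaluated at
`z = t⁻¹ (x - J p) + u`. Put `w = t⁻¹ (x - J p')`; then `z - u - w = t⁻¹ J (p' - p)` is bounded,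
so submultiplicativity of `1 + |·|` trades decay in `z` for decay in `w`, at the price of a power
of `1 + |u|` that the weight `(1 + |u|ᵏ)⁻¹` absorbs. Finally `(1 + |w|)⁻ᵏ` is at most a constant
times the single term of the dyadic sum with `2ⁿ ≈ 1 + |w|`.
-/

section EuclideanNorm

variable {ι κ : Type*} [Fintype ι] [Fintype κ]

theorem en_eq_norm_toLp (x : ι → ℝ) : en x = ‖WithLp.toLp 2 x‖ := by
  simp [en, EuclideanSpace.norm_eq]

theorem en_nonneg (x : ι → ℝ) : 0 ≤ en x := Real.sqrt_nonneg _

theorem sq_en (x : ι → ℝ) : en x ^ 2 = ∑ i, x i ^ 2 :=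
  Real.sq_sqrt (Finset.sum_nonneg fun _ _ => sq_nonneg _)

theorem en_sub_le (x y : ι → ℝ) : en (x - y) ≤ en x + en y := by
  simpa only [en_eq_norm_toLp, WithLp.toLp_sub] using
    norm_sub_le (WithLp.toLp 2 x) (WithLp.toLp 2 y)

theorem en_smul (c : ℝ) (x : ι → ℝ) : en (c • x) = |c| * en x := by
  simp only [en_eq_norm_toLp, WithLp.toLp_smul, norm_smul, Real.norm_eq_abs]

theorem abs_apply_le_en (x : ι → ℝ) (i : ι) : |x i| ≤ en x := by
  simpa [en_eq_norm_toLp] using PiLp.norm_apply_le (WithLp.toLp 2 x) i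

theorem en_mulVec_le [DecidableEq κ] (A : Matrix ι κ ℝ) (v : κ → ℝ) :
    en (A.mulVec v) ≤ opNorm A * en v := by
  simpa [en_eq_norm_toLp, opNorm, Matrix.toLpLin_apply] using
    (Matrix.toEuclideanLin A).toContinuousLinearMap.le_opNorm (WithLp.toLp 2 v)

theorem one_add_en_sub_le (x y : ι → ℝ) : 1 + en (x - y) ≤ (1 + en x) * (1 + en y) := by
  linarith [en_sub_le x y, mul_nonneg (en_nonneg x) (en_nonneg y)]

end EuclideanNorm

section Gaussian

variable {m : ℕ}

theorem gss_eq_exp_en (x : Idx m → ℝ) : gss x = Real.exp (-Real.pi * en x ^ 2) := by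
  rw [gss, sq_en]

theorem hasFDerivAt_gss (x : Idx m → ℝ) :
    HasFDerivAt gss (gss x • ((-Real.pi) • ∑ k, (2 * x k) •
      ContinuousLinearMap.proj (R := ℝ) (φ := fun _ : Idx m => ℝ) k)) x := by
  refine ((HasFDerivAt.fun_sum fun k _ => ?_).const_mul (-Real.pi)).exp
  simpa using (hasFDerivAt_apply (𝕜 := ℝ) (F' := fun _ : Idx m => ℝ) k x).pow 2

theorem fderiv_gss_single (x : Idx m → ℝ) (k : Idx m) :
    fderiv ℝ gss x (Pi.single k 1) = -(2 * Real.pi) * (x k * gss x) := by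
  rw [(hasFDerivAt_gss x).fderiv]
  simp only [_root_.smul_apply, _root_.sum_apply, ContinuousLinearMap.proj_apply, Pi.single_apply,
    smul_eq_mul, mul_ite, mul_one, mul_zero, Finset.sum_ite_eq', Finset.mem_univ, if_true]
  ring

theorem fderiv_fderiv_gss_single {j k : Idx m} (hjk : j ≠ k) (x : Idx m → ℝ) :
    fderiv ℝ (fun y => fderiv ℝ gss y (Pi.single j 1)) x (Pi.single k 1) =
      4 * Real.pi ^ 2 * (x j * x k * gss x) := by
  have hprod : HasFDerivAt (fun y : Idx m → ℝ => -(2 * Real.pi) * (y j * gss y)) _ x :=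
    ((hasFDerivAt_apply (𝕜 := ℝ) (F' := fun _ : Idx m => ℝ) j x).mul
      (hasFDerivAt_gss x).differentiableAt.hasFDerivAt).const_mul _
  simp only [fderiv_gss_single]
  rw [hprod.fderiv]
  simp only [_root_.smul_apply, _root_.add_apply, smul_eq_mul, fderiv_gss_single,
    ContinuousLinearMap.proj_apply, Pi.single_eq_of_ne hjk, mul_zero, add_zero]
  ring

theorem ddg_eq (i : Fin m) (x : Idx m → ℝ) :
    ddg i x = 4 * Real.pi ^ 2 * (x (Sum.inl i) * x (Sum.inr i) * gss x) :=
  fderiv_fderiv_gss_single Sum.inl_ne_inr x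

theorem one_add_pow_mul_exp_neg_pi_mul_sq_le (n : ℕ) {r : ℝ} (hr : 0 ≤ r) :
    (1 + r) ^ n * Real.exp (-Real.pi * r ^ 2) ≤ n.factorial * Real.exp 2 := by
  have hpow : (1 + r) ^ n ≤ n.factorial * Real.exp (1 + r) := by
    rw [← div_le_iff₀' (by positivity)]
    exact Real.pow_div_factorial_le_exp _ (by positivity) n
  have hexponent : 1 + r + -Real.pi * r ^ 2 ≤ 2 := by
    nlinarith [Real.pi_gt_three, sq_nonneg (2 * r - 1), sq_nonneg r]
  calc (1 + r) ^ n * Real.exp (-Real.pi * r ^ 2)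
      ≤ n.factorial * Real.exp (1 + r) * Real.exp (-Real.pi * r ^ 2) := by gcongr
    _ = n.factorial * Real.exp (1 + r + -Real.pi * r ^ 2) := by rw [mul_assoc, ← Real.exp_add]
    _ ≤ n.factorial * Real.exp 2 := by gcongr

theorem abs_ddg_mul_one_add_en_pow_le (k : ℕ) (i : Fin m) (z : Idx m → ℝ) :
    |ddg i z| * (1 + en z) ^ k ≤ 4 * Real.pi ^ 2 * ((k + 2).factorial * Real.exp 2) := by
  have hz := en_nonneg z
  have hcoord (j : Idx m) : |z j| ≤ 1 + en z := by linarith [abs_apply_le_en z j]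
  calc |ddg i z| * (1 + en z) ^ k
      = 4 * Real.pi ^ 2 * (|z (Sum.inl i)| * |z (Sum.inr i)| * gss z) * (1 + en z) ^ k := by
        rw [ddg_eq, gss]
        simp only [abs_mul, Real.abs_exp, abs_pow, abs_of_pos Real.pi_pos, Nat.abs_ofNat]
    _ ≤ 4 * Real.pi ^ 2 * ((1 + en z) * (1 + en z) * gss z) * (1 + en z) ^ k := by
        rw [gss]
        gcongr <;> exact hcoord _
    _ = 4 * Real.pi ^ 2 * ((1 + en z) ^ (k + 2) * Real.exp (-Real.pi * en z ^ 2)) := by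
        rw [gss_eq_exp_en]
        ring
    _ ≤ 4 * Real.pi ^ 2 * ((k + 2).factorial * Real.exp 2) := by
        gcongr ?_ * ?_
        exact one_add_pow_mul_exp_neg_pi_mul_sq_le _ hz

end Gaussian

section PolynomialWeights

variable {ι : Type*} [Fintype ι]

theorem one_add_en_pow_le {D : ℝ} {u w z : ι → ℝ} (h : en (z - u - w) ≤ D) (k : ℕ) :
    (1 + en w) ^ k ≤ (2 * (1 + D)) ^ k * ((1 + en u ^ k) * (1 + en z) ^ k) := by
  have hu := en_nonneg u
  have hw := en_nonneg w
  have hz := en_nonneg z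
  have hbase : 1 + en w ≤ (1 + en z) * (1 + en u) * (1 + D) :=
    calc 1 + en w = 1 + en (z - u - (z - u - w)) := by rw [sub_sub_cancel]
      _ ≤ (1 + en (z - u)) * (1 + en (z - u - w)) := one_add_en_sub_le _ _
      _ ≤ (1 + en z) * (1 + en u) * (1 + D) := by
          gcongr
          · linarith [en_nonneg (z - u - w)]
          · exact one_add_en_sub_le z u
  have hD : 0 ≤ D := (en_nonneg _).trans h
  have hpow : (1 + en u) ^ k ≤ 2 ^ k * (1 + en u ^ k) :=
    calc (1 + en u) ^ k ≤ 2 ^ (k - 1) * (1 ^ k + en u ^ k) := add_pow_le zero_le_one hu k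
      _ ≤ 2 ^ k * (1 + en u ^ k) := by
          rw [one_pow]
          gcongr
          · exact one_le_two
          · exact k.sub_le 1
  calc (1 + en w) ^ k ≤ ((1 + en z) * (1 + en u) * (1 + D)) ^ k := by gcongr
    _ = (1 + en z) ^ k * (1 + en u) ^ k * (1 + D) ^ k := by simp only [mul_pow]
    _ ≤ (1 + en z) ^ k * (2 ^ k * (1 + en u ^ k)) * (1 + D) ^ k := by gcongr
    _ = (2 * (1 + D)) ^ k * ((1 + en u ^ k) * (1 + en z) ^ k) := by rw [mul_pow]; ring

theorem inv_one_add_pow_le_tsum_dyadic {k : ℕ} (hk : k ≠ 0) {r : ℝ} (hr : 0 ≤ r) :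
    ((1 + r) ^ k)⁻¹ ≤
      2 ^ k * ∑' n : ℕ, (2 : ℝ) ^ (-((k : ℤ) * n)) * (if r ≤ 2 ^ n then 1 else 0) := by
  have hweight (n : ℕ) : (2 : ℝ) ^ (-((k : ℤ) * n)) = (((2 : ℝ) ^ k)⁻¹) ^ n := by
    rw [_root_.zpow_neg, _root_.zpow_mul, zpow_natCast, zpow_natCast, inv_pow]
  have hsummable : Summable fun n : ℕ =>
      (2 : ℝ) ^ (-((k : ℤ) * n)) * (if r ≤ 2 ^ n then 1 else 0) := by
    refine Summable.of_nonneg_of_le (fun n => by positivity) (fun n => ?_)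
      (summable_geometric_of_lt_one (r := ((2 : ℝ) ^ k)⁻¹) (by positivity)
        (inv_lt_one_of_one_lt₀ (one_lt_pow₀ one_lt_two hk)))
    rw [hweight]
    exact mul_le_of_le_one_right (by positivity) (by split_ifs <;> norm_num)
  obtain ⟨n, hn_le, hn_lt⟩ := exists_nat_pow_near (le_add_of_nonneg_right hr) one_lt_two
  have hr_le : r ≤ 2 ^ (n + 1) := by linarith
  calc ((1 + r) ^ k)⁻¹ ≤ ((2 ^ n) ^ k)⁻¹ := by gcongr
    _ = 2 ^ k * ((2 : ℝ) ^ (-((k : ℤ) * (n + 1 : ℕ))) * (if r ≤ 2 ^ (n + 1) then 1 else 0)) := by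
        rw [if_pos hr_le, hweight, ← pow_mul, mul_comm n, pow_mul, pow_succ, inv_pow]
        field_simp
    _ ≤ _ := by
        gcongr
        exact hsummable.le_tsum (n + 1) fun _ _ => by positivity

theorem inv_one_add_en_pow_mul_le_tsum_dyadic {k : ℕ} (hk : k ≠ 0) {D : ℝ} {u w z : ι → ℝ}
    (h : en (z - u - w) ≤ D) {a K : ℝ} (ha : 0 ≤ a) (haK : a * (1 + en z) ^ k ≤ K) :
    (1 + en u ^ k)⁻¹ * a ≤ K * (4 * (1 + D)) ^ k *
      ∑' n : ℕ, (2 : ℝ) ^ (-((k : ℤ) * n)) * (if en w ≤ 2 ^ n then 1 else 0) := by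
  have hu := en_nonneg u
  have hz := en_nonneg z
  have hw := en_nonneg w
  have hD : 0 ≤ D := (en_nonneg _).trans h
  have hK : 0 ≤ K := le_trans (by positivity) haK
  have hdecay : (1 + en u ^ k)⁻¹ * a ≤ K * (2 * (1 + D)) ^ k * ((1 + en w) ^ k)⁻¹ := by
    rw [← div_eq_mul_inv, le_div_iff₀ (by positivity)]
    calc (1 + en u ^ k)⁻¹ * a * (1 + en w) ^ k
        ≤ (1 + en u ^ k)⁻¹ * a * ((2 * (1 + D)) ^ k * ((1 + en u ^ k) * (1 + en z) ^ k)) := by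
          gcongr
          exact one_add_en_pow_le h k
      _ = a * (1 + en z) ^ k * (2 * (1 + D)) ^ k := by field_simp
      _ ≤ K * (2 * (1 + D)) ^ k := by gcongr
  have hconst : (4 * (1 + D)) ^ k = (2 * (1 + D)) ^ k * 2 ^ k := by
    rw [← mul_pow]
    ring
  rw [hconst, ← mul_assoc, mul_assoc (_ * _) (2 ^ k)]
  refine hdecay.trans ?_
  gcongr
  exact inv_one_add_pow_le_tsum_dyadic hk hw

end PolynomialWeights

theorem inv_one_add_en_pow_mul_abs_dil_le_tsum_dyadic {m k : ℕ} (hk : k ≠ 0) {φ : (Idx m → ℝ) → ℝ}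
    {K : ℝ} (hφ : ∀ z, |φ z| * (1 + en z) ^ k ≤ K) {D t : ℝ} (ht : 0 < t) (u : Idx m → ℝ)
    {y y' : Idx m → ℝ} (hy : en (y - y') ≤ D * t) :
    (1 + en u ^ k)⁻¹ * |dil t φ (y + t • u)| ≤ K * (4 * (1 + D)) ^ k * (t ^ (2 * m))⁻¹ *
      ∑' n : ℕ, (2 : ℝ) ^ (-((k : ℤ) * n)) * (if en y' ≤ 2 ^ n * t then 1 else 0) := by
  have hscale (v : Idx m → ℝ) (r : ℝ) : en (t⁻¹ • v) ≤ r ↔ en v ≤ r * t := by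
    rw [en_smul, abs_of_pos (inv_pos.2 ht), inv_mul_le_iff₀' ht]
  have hclose : en (t⁻¹ • (y + t • u) - u - t⁻¹ • y') ≤ D := by
    rwa [smul_add, inv_smul_smul₀ ht.ne', add_sub_cancel_right, ← smul_sub, hscale]
  have hunit := inv_one_add_en_pow_mul_le_tsum_dyadic hk hclose (abs_nonneg _) (hφ _)
  simp only [hscale] at hunit
  calc (1 + en u ^ k)⁻¹ * |dil t φ (y + t • u)|
      = (t ^ (2 * m))⁻¹ * ((1 + en u ^ k)⁻¹ * |φ (t⁻¹ • (y + t • u))|) := by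
        rw [dil, abs_mul, abs_of_pos (by positivity), mul_left_comm]
    _ ≤ (t ^ (2 * m))⁻¹ * (K * (4 * (1 + D)) ^ k * _) := by gcongr
    _ = _ := by ring

theorem statement8_general {κ : Type*} [Fintype κ] [DecidableEq κ] (m : ℕ) {k : ℕ} (hk : k ≠ 0)
    (B R : ℝ) :
    ∃ C : ℝ, 0 < C ∧ ∀ J : Matrix (Idx m) κ ℝ, opNorm J ≤ B →
      ∀ u : Idx m → ℝ, ∀ i : Fin m, ∀ x : Idx m → ℝ, ∀ t : ℝ, 0 < t →
      ∀ p p' : κ → ℝ, en (p' - p) ≤ R * t →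
        (1 + en u ^ k)⁻¹ * |dil t (ddg i) (x - J.mulVec p + t • u)| ≤
          C * (t ^ (2 * m))⁻¹ * ∑' n : ℕ, (2 : ℝ) ^ (-((k : ℤ) * n)) *
            (if en (x - J.mulVec p') ≤ 2 ^ n * t then 1 else 0) := by
  refine ⟨4 * Real.pi ^ 2 * ((k + 2).factorial * Real.exp 2) * (4 * (1 + |B * R|)) ^ k,
    by positivity, fun J hJ u i x t ht p p' hp => ?_⟩
  refine inv_one_add_en_pow_mul_abs_dil_le_tsum_dyadic hk (abs_ddg_mul_one_add_en_pow_le k i) ht u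
    ?_
  calc en (x - J.mulVec p - (x - J.mulVec p'))
      = en (J.mulVec (p' - p)) := by rw [sub_sub_sub_cancel_left, Matrix.mulVec_sub]
    _ ≤ opNorm J * en (p' - p) := en_mulVec_le _ _
    _ ≤ B * (R * t) := mul_le_mul hJ hp (en_nonneg _) ((norm_nonneg _).trans hJ)
    _ = B * R * t := (mul_assoc _ _ _).symm
    _ ≤ |B * R| * t := by gcongr; exact le_abs_self _

/-- Lemma (Gaussian estimate). -/
theorem statement8 (m : ℕ) (hm : 2 ≤ m) (B : ℝ) (hB : 0 < B) :
    ∃ C : ℝ, 0 < C ∧ ∀ J : Matrix (Idx m) (Fin m) ℝ, opNorm J ≤ B →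
      ∀ u : Idx m → ℝ, ∀ i : Fin m, ∀ x : Idx m → ℝ, ∀ t : ℝ, 0 < t →
      ∀ p p' : Fin m → ℝ, en (p' - p) < 2^(m+3) * t →
        (1 + en u ^ (4*m))⁻¹ * |dil t (ddg i) (x - J.mulVec p + t • u)| ≤
          C * (t^(2*m))⁻¹ * ∑' n : ℕ, (2:ℝ)^(-(4*(n:ℤ)*(m:ℤ))) *
            (if en (x - J.mulVec p') ≤ 2^n * t then 1 else 0) := by
  obtain ⟨C, hC, hbound⟩ := statement8_general (κ := Fin m) m (k := 4 * m) (by lia) B (2 ^ (m + 3))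
  refine ⟨C, hC, fun J hJ u i x t ht p p' hp => ?_⟩
  simpa only [Nat.cast_mul, Nat.cast_ofNat, mul_right_comm] using hbound J hJ u i x t ht p p' hp.le

end SBL
end
end

section
/- Let m ≥ 1 be an integer. There is a constant C, depending only on m, such that for every convex tree 𝒯 of dyadic cubes in ℝ^m one has ∑_{k∈ℤ} 2^{mk} · #(∂T_k ∩ (2^k ℤ)^m) ≤ C |Q_𝒯|, where T_k := ∪{Q ∈ 𝒯 : ℓ(Q) = 2^k}, ∂T_k is the topological boundary of T_k in ℝ^m, and #(∂T_k ∩ (2^k ℤ)^m) is the number of lattice points of (2^k ℤ)^m lying on ∂T_k. -/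
open MeasureTheory Matrix
open scoped ENNReal NNReal BigOperators

noncomputable section

namespace SBL

/-!
Call the maximal dyadic subcubes of `Q_𝒯` outside `𝒯` the stopping cubes. They are pairwise
disjoint, so their volumes add up to at most `|Q_𝒯|`. By convexity `T_k` is `Q_𝒯` minus the stopping
cubes of side length at least `2 ^ k`, of which there are finitely many; hence every point of `∂T_k`
lies on the boundary of `Q_𝒯` or of such a stopping cube. A single cube of side length `2 ^ (k + l)`
has `O(2 ^ ((m - 1) l))` points of `(2 ^ k ℤ) ^ m` on its boundary, so its total contribution is a
geometric series in `l` bounded by a multiple of its volume.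
-/

section IntegerBox

variable {ι : Type*} [Fintype ι] [DecidableEq ι]

lemma card_Icc_sdiff_piFinset_Ioo_le (a : ι → ℤ) (N : ℕ) :
    (Finset.Icc a (fun i => a i + N) \ Fintype.piFinset fun i => Finset.Ioo (a i) (a i + N)).card ≤
      2 * Fintype.card ι * (N + 1) ^ (Fintype.card ι - 1) := by
  have hIcc : (Finset.Icc a fun i => a i + N).card = (N + 1) ^ Fintype.card ι := by
    simp [Pi.card_Icc, add_assoc, add_sub_cancel_left, Int.toNat_natCast_add_one]
  have hIoo : (Fintype.piFinset fun i => Finset.Ioo (a i) (a i + N)).card =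
      (N - 1) ^ Fintype.card ι := by
    simp
  have hsub : (Fintype.piFinset fun i => Finset.Ioo (a i) (a i + N)) ⊆
      Finset.Icc a fun i => a i + N := fun z hz =>
    have hlt i := Finset.mem_Ioo.1 (Fintype.mem_piFinset.1 hz i)
    Finset.mem_Icc.2 ⟨fun i => (hlt i).1.le, fun i => (hlt i).2.le⟩
  rw [Finset.card_sdiff_of_subset hsub, hIcc, hIoo, Nat.sub_le_iff_le_add]
  have hle : ((N - 1 : ℕ) : ℤ) ≤ N + 1 := by omega
  have hdiff : (N : ℤ) + 1 - (N - 1 : ℕ) ≤ 2 := by omega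
  have hpow := (le_abs_self _).trans
    (abs_pow_sub_pow_le (α := ℤ) (N + 1) (N - 1 : ℕ) (Fintype.card ι))
  rw [abs_of_nonneg (sub_nonneg.2 hle), abs_of_nonneg (by positivity : (0 : ℤ) ≤ N + 1),
    Nat.abs_cast, max_eq_left hle] at hpow
  zify
  calc ((N : ℤ) + 1) ^ Fintype.card ι
      ≤ (N + 1 - (N - 1 : ℕ)) * Fintype.card ι * (N + 1) ^ (Fintype.card ι - 1) +
        (N - 1 : ℕ) ^ Fintype.card ι := by linarith
    _ ≤ 2 * Fintype.card ι * (N + 1) ^ (Fintype.card ι - 1) + (N - 1 : ℕ) ^ Fintype.card ι := by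
      gcongr

lemma card_Icc_sdiff_piFinset_Ioo_mul_le (a : ι → ℤ) {N : ℕ} (hN : 1 ≤ N) :
    (Finset.Icc a (fun i => a i + N) \
      Fintype.piFinset fun i => Finset.Ioo (a i) (a i + N)).card * N ≤
      Fintype.card ι * (2 * N) ^ Fintype.card ι := by
  calc _ ≤ 2 * Fintype.card ι * (N + 1) ^ (Fintype.card ι - 1) * N := by
        gcongr
        exact card_Icc_sdiff_piFinset_Ioo_le a N
    _ ≤ 2 * Fintype.card ι * (2 * N) ^ (Fintype.card ι - 1) * N := by
        gcongr
        omega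
    _ = Fintype.card ι * (2 * N) ^ Fintype.card ι := by
        cases Fintype.card ι with
        | zero => simp
        | succ d => rw [Nat.add_sub_cancel]; ring

end IntegerBox

lemma frontier_biUnion_subset {X ι : Type*} [TopologicalSpace X] {s : Set ι} (hs : s.Finite)
    (f : ι → Set X) : frontier (⋃ i ∈ s, f i) ⊆ ⋃ i ∈ s, frontier (f i) := by
  rintro x ⟨hcl, hint⟩
  rw [hs.closure_biUnion] at hcl
  obtain ⟨i, hi, hx⟩ := Set.mem_iUnion₂.1 hcl
  exact Set.mem_biUnion hi
    ⟨hx, fun h => hint (interior_mono (Set.subset_biUnion_of_mem hi) h)⟩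

lemma frontier_sdiff_subset {X : Type*} [TopologicalSpace X] (s t : Set X) :
    frontier (s \ t) ⊆ frontier s ∪ frontier t := by
  rw [Set.sdiff_eq, ← frontier_compl t]
  exact (frontier_inter_subset s tᶜ).trans
    (Set.union_subset_union Set.inter_subset_left Set.inter_subset_right)

lemma zpow_le_zpow_iff_of_one_lt {x : ℝ≥0∞} (hx : 1 < x) (hx' : x ≠ ∞) {a b : ℤ} :
    x ^ a ≤ x ^ b ↔ a ≤ b := by
  lift x to ℝ≥0 using hx'
  rw [ENNReal.one_lt_coe_iff] at hx
  have h0 : x ≠ 0 := (zero_lt_one.trans hx).ne'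
  rw [← ENNReal.coe_zpow h0, ← ENNReal.coe_zpow h0, ENNReal.coe_le_coe,
    zpow_le_zpow_iff_right₀ hx]

section DyadicCubes

variable {m : ℕ}

/-- The index of the dyadic cube of side length `2 ^ k` that contains `x`. -/
def cubeAt (k : ℤ) (x : Fin m → ℝ) : ℤ × (Fin m → ℤ) := (k, fun i => ⌊x i / 2 ^ k⌋)

lemma mem_dC_iff_cubeAt_eq {x : Fin m → ℝ} {Q : ℤ × (Fin m → ℤ)} :
    x ∈ dC Q ↔ cubeAt Q.1 x = Q := by
  have h2 : (0 : ℝ) < 2 ^ Q.1 := by positivity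
  simp only [dC, Set.mem_ofPred_eq, cubeAt, Prod.ext_iff, funext_iff, true_and, Int.floor_eq_iff,
    le_div_iff₀ h2, div_lt_iff₀ h2, mul_comm]

lemma mem_dC_cubeAt (k : ℤ) (x : Fin m → ℝ) : x ∈ dC (cubeAt k x) :=
  mem_dC_iff_cubeAt_eq.2 rfl

lemma cubeAt_congr_of_le {j k : ℤ} (hjk : j ≤ k) {x y : Fin m → ℝ}
    (h : cubeAt j x = cubeAt j y) : cubeAt k x = cubeAt k y := by
  obtain ⟨l, rfl⟩ := Int.le.dest hjk
  have hfloor (t : ℝ) : ⌊t / 2 ^ (j + l : ℤ)⌋ = ⌊t / 2 ^ j⌋ / ((2 ^ l : ℕ) : ℤ) := by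
    rw [zpow_add₀ two_ne_zero, zpow_natCast, ← div_div, ← Int.floor_div_natCast]
    push_cast
    rfl
  simp only [cubeAt, Prod.mk.injEq, true_and, funext_iff] at h ⊢
  simp only [hfloor, h, implies_true]

lemma dC_subset_of_mem {P Q : ℤ × (Fin m → ℤ)} {x : Fin m → ℝ} (hP : x ∈ dC P) (hQ : x ∈ dC Q)
    (hle : P.1 ≤ Q.1) : dC P ⊆ dC Q := by
  intro y hy
  rw [mem_dC_iff_cubeAt_eq] at hP hQ hy ⊢
  exact (cubeAt_congr_of_le hle (hy.trans hP.symm)).trans hQ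

lemma dC_eq_pi_Ico (Q : ℤ × (Fin m → ℤ)) :
    dC Q = Set.univ.pi fun i => Set.Ico ((2 : ℝ) ^ Q.1 * Q.2 i) (2 ^ Q.1 * (Q.2 i + 1)) := by
  ext x
  simp only [dC, Set.mem_ofPred_eq, Set.mem_univ_pi, Set.mem_Ico]

lemma measurableSet_dC (Q : ℤ × (Fin m → ℤ)) : MeasurableSet (dC Q) := by
  rw [dC_eq_pi_Ico]
  exact MeasurableSet.univ_pi fun _ => measurableSet_Ico

lemma volume_dC (Q : ℤ × (Fin m → ℤ)) : volume (dC Q) = 2 ^ ((m : ℤ) * Q.1) := by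
  have hside : ENNReal.ofReal (2 ^ Q.1) = ((2 ^ Q.1 : ℝ≥0) : ℝ≥0∞) := by
    rw [← ENNReal.ofReal_coe_nnreal]
    push_cast
    rfl
  simp only [dC_eq_pi_Ico, Real.volume_pi_Ico, mul_add, mul_one, add_sub_cancel_left, hside,
    Finset.prod_const, Finset.card_univ, Fintype.card_fin]
  rw [← ENNReal.coe_pow, ← zpow_natCast, ← _root_.zpow_mul, mul_comm, ENNReal.coe_zpow two_ne_zero,
    ENNReal.coe_ofNat]

lemma dC_nonempty (Q : ℤ × (Fin m → ℤ)) : (dC Q).Nonempty := by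
  refine nonempty_of_measure_ne_zero (μ := volume) ?_
  rw [volume_dC]
  exact (ENNReal.zpow_pos two_ne_zero ENNReal.ofNat_ne_top _).ne'

lemma fst_le_fst_of_dC_subset (hm : 1 ≤ m) {P Q : ℤ × (Fin m → ℤ)} (h : dC P ⊆ dC Q) :
    P.1 ≤ Q.1 := by
  have hvol := measure_mono (μ := volume) h
  rw [volume_dC, volume_dC,
    zpow_le_zpow_iff_of_one_lt ENNReal.one_lt_two ENNReal.ofNat_ne_top] at hvol
  exact le_of_mul_le_mul_left hvol (by exact_mod_cast hm)

lemma dC_injective (hm : 1 ≤ m) :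
    Function.Injective (dC : ℤ × (Fin m → ℤ) → Set (Fin m → ℝ)) := by
  intro P Q h
  have hscale : P.1 = Q.1 :=
    le_antisymm (fst_le_fst_of_dC_subset hm h.subset) (fst_le_fst_of_dC_subset hm h.superset)
  obtain ⟨x, hxP⟩ := dC_nonempty P
  have hxQ : x ∈ dC Q := h ▸ hxP
  rw [mem_dC_iff_cubeAt_eq] at hxP hxQ
  rw [← hxP, ← hxQ, hscale]

lemma closure_dC (Q : ℤ × (Fin m → ℤ)) :
    closure (dC Q) =
      {x | ∀ i, (2 : ℝ) ^ Q.1 * Q.2 i ≤ x i ∧ x i ≤ (2 : ℝ) ^ Q.1 * (Q.2 i + 1)} := by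
  have hne (i : Fin m) : (2 : ℝ) ^ Q.1 * Q.2 i ≠ 2 ^ Q.1 * (Q.2 i + 1) := by
    have hpos : (0 : ℝ) < 2 ^ Q.1 := by positivity
    exact (mul_lt_mul_of_pos_left (lt_add_one _) hpos).ne
  ext x
  simp only [dC_eq_pi_Ico, closure_pi_set, closure_Ico (hne _), Set.mem_univ_pi, Set.mem_Icc,
    Set.mem_ofPred_eq]

lemma interior_dC (Q : ℤ × (Fin m → ℤ)) :
    interior (dC Q) =
      {x | ∀ i, (2 : ℝ) ^ Q.1 * Q.2 i < x i ∧ x i < (2 : ℝ) ^ Q.1 * (Q.2 i + 1)} := by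
  ext x
  simp only [dC_eq_pi_Ico, interior_pi_set Set.finite_univ, interior_Ico, Set.mem_univ_pi,
    Set.mem_Ioo, Set.mem_ofPred_eq]

end DyadicCubes

section GridPoints

variable {m : ℕ}

/-- The lattice `(2 ^ k ℤ) ^ m`. -/
def grid (m : ℕ) (k : ℤ) : Set (Fin m → ℝ) := {y | ∀ i, ∃ z : ℤ, y i = (2 : ℝ) ^ k * z}

/-- The points of the lattice `(2 ^ k ℤ) ^ m` on the boundary of the cube `P`. It is empty when `k`
exceeds the scale of `P`: the vertices of `P` that would occur then make the sum over `k`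
diverge. -/
def gridBoundary (k : ℤ) (P : ℤ × (Fin m → ℤ)) : Set (Fin m → ℝ) :=
  {y | k ≤ P.1 ∧ y ∈ frontier (dC P) ∩ grid m k}

lemma gridBoundary_subset_image (P : ℤ × (Fin m → ℤ)) (l : ℕ) :
    gridBoundary (P.1 - l) P ⊆ (fun (z : Fin m → ℤ) i => (2 : ℝ) ^ (P.1 - l) * z i) ''
      ↑(Finset.Icc (fun i => 2 ^ l * P.2 i) (fun i => 2 ^ l * P.2 i + (2 ^ l : ℕ)) \
        Fintype.piFinset fun i => Finset.Ioo (2 ^ l * P.2 i) (2 ^ l * P.2 i + (2 ^ l : ℕ))) := by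
  rintro y ⟨-, ⟨hcl, hint⟩, hgrid⟩
  choose z hz using hgrid
  obtain rfl : y = fun i => (2 : ℝ) ^ (P.1 - l) * z i := funext hz
  have hpos : (0 : ℝ) < 2 ^ (P.1 - l) := by positivity
  have hscale : (2 : ℝ) ^ P.1 = 2 ^ (P.1 - l) * 2 ^ l := by
    rw [← zpow_natCast, ← zpow_add₀ two_ne_zero, sub_add_cancel]
  simp only [closure_dC, interior_dC, Set.mem_ofPred_eq, hscale, mul_assoc,
    mul_le_mul_iff_right₀ hpos, mul_lt_mul_iff_right₀ hpos] at hcl hint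
  simp only [mul_add, mul_one] at hcl hint
  refine ⟨z, ?_, rfl⟩
  simp only [Finset.coe_sdiff, Finset.coe_Icc, Set.mem_sdiff, Set.mem_Icc, Pi.le_def,
    Finset.mem_coe, Fintype.mem_piFinset, Finset.mem_Ioo, ← forall_and]
  exact ⟨by exact_mod_cast hcl, by exact_mod_cast hint⟩

lemma encard_gridBoundary_mul_le (P : ℤ × (Fin m → ℤ)) (l : ℕ) :
    ((gridBoundary (P.1 - l) P).encard : ℝ≥0∞) * 2 ^ l ≤ m * (2 * 2 ^ l) ^ m := by
  have hcard := (Set.encard_le_encard (gridBoundary_subset_image P l)).trans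
    (Set.encard_image_le _ _)
  rw [Set.encard_coe_eq_coe_finsetCard] at hcard
  have hbox := card_Icc_sdiff_piFinset_Ioo_mul_le (fun i => 2 ^ l * P.2 i)
    (Nat.one_le_two_pow (n := l))
  rw [Fintype.card_fin] at hbox
  refine (mul_le_mul_left (ENat.toENNReal_mono hcard) _).trans ?_
  exact_mod_cast hbox

lemma zpow_mul_encard_gridBoundary_le (P : ℤ × (Fin m → ℤ)) (l : ℕ) :
    (2 : ℝ≥0∞) ^ ((m : ℤ) * (P.1 - l)) * (gridBoundary (P.1 - l) P).encard ≤
      m * 2 ^ m * volume (dC P) * 2⁻¹ ^ l := by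
  have hvol : volume (dC P) = 2 ^ ((m : ℤ) * (P.1 - l)) * (2 ^ l) ^ m := by
    rw [volume_dC, ← pow_mul, ← zpow_natCast, ← ENNReal.zpow_add two_ne_zero ENNReal.ofNat_ne_top]
    congr 1
    push_cast
    ring
  rw [← ENNReal.inv_pow, ← div_eq_mul_inv, ENNReal.le_div_iff_mul_le (by simp) (by simp)]
  calc _ = (2 : ℝ≥0∞) ^ ((m : ℤ) * (P.1 - l)) * ((gridBoundary (P.1 - l) P).encard * 2 ^ l) :=
        mul_assoc _ _ _
    _ ≤ 2 ^ ((m : ℤ) * (P.1 - l)) * (m * (2 * 2 ^ l) ^ m) := by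
        gcongr 2 ^ ((m : ℤ) * (P.1 - l)) * ?_
        exact encard_gridBoundary_mul_le P l
    _ = m * 2 ^ m * volume (dC P) := by
        rw [hvol, mul_pow]
        ring

lemma tsum_encard_gridBoundary_le (P : ℤ × (Fin m → ℤ)) :
    ∑' k : ℤ, (2 : ℝ≥0∞) ^ ((m : ℤ) * k) * (gridBoundary k P).encard ≤
      m * 2 ^ (m + 1) * volume (dC P) := by
  have hinj : Function.Injective fun l : ℕ => P.1 - (l : ℤ) :=
    sub_right_injective.comp Nat.cast_injective
  have hsupp : Function.support (fun k : ℤ => (2 : ℝ≥0∞) ^ ((m : ℤ) * k) *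
      (gridBoundary k P).encard) ⊆ Set.range fun l : ℕ => P.1 - (l : ℤ) := by
    intro k hk
    obtain ⟨y, hle, -⟩ : (gridBoundary k P).Nonempty := by
      rw [Set.nonempty_iff_ne_empty]
      rintro h
      simp [h] at hk
    obtain ⟨l, hl⟩ := Int.le.dest hle
    exact ⟨l, by simp [← hl]⟩
  calc _ = ∑' l : ℕ, (2 : ℝ≥0∞) ^ ((m : ℤ) * (P.1 - l)) * (gridBoundary (P.1 - l) P).encard :=
        (hinj.tsum_eq hsupp).symm
    _ ≤ ∑' l : ℕ, m * 2 ^ m * volume (dC P) * 2⁻¹ ^ l :=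
        ENNReal.tsum_le_tsum (zpow_mul_encard_gridBoundary_le P)
    _ = m * 2 ^ (m + 1) * volume (dC P) := by
        rw [ENNReal.tsum_mul_left, ENNReal.tsum_geometric, ENNReal.one_sub_inv_two, inv_inv]
        ring

end GridPoints

section StoppingCubes

variable {m : ℕ} {T : Set (ℤ × (Fin m → ℤ))} {Qt : ℤ × (Fin m → ℤ)} {k : ℤ}

/-- The maximal dyadic subcubes of `Qt` that do not belong to `T`. -/
def stoppingCubes (T : Set (ℤ × (Fin m → ℤ))) (Qt : ℤ × (Fin m → ℤ)) :
    Set (ℤ × (Fin m → ℤ)) :=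
  {P | MaximalFor (fun Q => Q ∉ T ∧ dC Q ⊆ dC Qt) dC P}

lemma exists_mem_stoppingCubes (hm : 1 ≤ m) (hk : k ≤ Qt.1) {x : Fin m → ℝ} (hx : x ∈ dC Qt)
    (hxT : cubeAt k x ∉ T) : ∃ P ∈ stoppingCubes T Qt, k ≤ P.1 ∧ x ∈ dC P := by
  obtain ⟨j, ⟨hj, hjT⟩, hmax⟩ := Int.exists_greatest_of_bdd
    (P := fun j => j ≤ Qt.1 ∧ cubeAt j x ∉ T) ⟨Qt.1, fun _ h => h.1⟩ ⟨k, hk, hxT⟩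
  refine ⟨cubeAt j x, ⟨⟨hjT, dC_subset_of_mem (mem_dC_cubeAt j x) hx hj⟩, ?_⟩,
    hmax k ⟨hk, hxT⟩, mem_dC_cubeAt j x⟩
  intro P ⟨hPT, hPQt⟩ hsub
  have hxP : x ∈ dC P := hsub (mem_dC_cubeAt j x)
  have hPx := mem_dC_iff_cubeAt_eq.1 hxP
  exact dC_subset_of_mem hxP (mem_dC_cubeAt j x)
    (hmax P.1 ⟨fst_le_fst_of_dC_subset hm hPQt, hPx.symm ▸ hPT⟩)

lemma pairwiseDisjoint_stoppingCubes (hm : 1 ≤ m) : (stoppingCubes T Qt).PairwiseDisjoint dC := by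
  intro P hP R hR hne
  refine Set.disjoint_left.2 fun x hxP hxR => hne (dC_injective hm ?_)
  rcases le_total P.1 R.1 with hle | hle
  · have hsub := dC_subset_of_mem hxP hxR hle
    exact hsub.antisymm (hP.2 hR.1 hsub)
  · have hsub := dC_subset_of_mem hxR hxP hle
    exact (hR.2 hP.1 hsub).antisymm hsub

lemma tsum_volume_stoppingCubes_le (hm : 1 ≤ m) (T : Set (ℤ × (Fin m → ℤ)))
    (Qt : ℤ × (Fin m → ℤ)) : ∑' P : stoppingCubes T Qt, volume (dC P.1) ≤ volume (dC Qt) := by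
  rw [← measure_biUnion (Set.to_countable _) (pairwiseDisjoint_stoppingCubes hm)
    fun P _ => measurableSet_dC P]
  exact measure_mono (Set.iUnion₂_subset fun P hP => hP.1.2)

lemma tsum_volume_insert_stoppingCubes_le (hm : 1 ≤ m) (T : Set (ℤ × (Fin m → ℤ)))
    (Qt : ℤ × (Fin m → ℤ)) :
    ∑' P : ↥(insert Qt (stoppingCubes T Qt)), volume (dC P.1) ≤ 2 * volume (dC Qt) := by
  rw [two_mul, Set.insert_eq]
  refine (ENNReal.tsum_union_le (fun P => volume (dC P)) _ _).trans ?_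
  rw [tsum_singleton Qt fun P => volume (dC P)]
  gcongr
  exact tsum_volume_stoppingCubes_le hm T Qt

lemma finite_stoppingCubes_ge (hm : 1 ≤ m) (T : Set (ℤ × (Fin m → ℤ)))
    (Qt : ℤ × (Fin m → ℤ)) (k : ℤ) : {P ∈ stoppingCubes T Qt | k ≤ P.1}.Finite := by
  have hsum : ∑' P : stoppingCubes T Qt, volume (dC P.1) ≠ ∞ := by
    refine ne_top_of_le_ne_top ?_ (tsum_volume_stoppingCubes_le hm T Qt)
    rw [volume_dC]
    exact ENNReal.zpow_ne_top two_ne_zero ENNReal.ofNat_ne_top _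
  have hfin := ENNReal.finite_const_le_of_tsum_ne_top hsum
    (ENNReal.zpow_pos two_ne_zero ENNReal.ofNat_ne_top ((m : ℤ) * k)).ne'
  refine (hfin.image Subtype.val).subset fun P ⟨hP, hkP⟩ => ⟨⟨P, hP⟩, ?_, rfl⟩
  rw [Set.mem_ofPred_eq, volume_dC,
    zpow_le_zpow_iff_of_one_lt ENNReal.one_lt_two ENNReal.ofNat_ne_top]
  gcongr

lemma Tkset_eq_sdiff (hm : 1 ≤ m) (hT : ConvexTree T Qt) (hk : k ≤ Qt.1) :
    Tkset T k = dC Qt \ ⋃ P ∈ {P ∈ stoppingCubes T Qt | k ≤ P.1}, dC P := by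
  obtain ⟨-, hsubQt, hconvex⟩ := hT
  refine Set.Subset.antisymm (fun x hx => ?_) fun x ⟨hxQt, hxP⟩ => ?_
  · obtain ⟨Q, ⟨hQT, rfl⟩, hxQ⟩ := Set.mem_iUnion₂.1 hx
    refine ⟨hsubQt Q hQT hxQ, fun hxU => ?_⟩
    obtain ⟨P, ⟨hP, hle⟩, hxP⟩ := Set.mem_iUnion₂.1 hxU
    exact hP.1.1 (hconvex Q hQT P (dC_subset_of_mem hxQ hxP hle) hP.1.2)
  · refine Set.mem_biUnion (x := cubeAt k x) ⟨?_, rfl⟩ (mem_dC_cubeAt k x)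
    by_contra hxT
    obtain ⟨P, hP, hle, hx⟩ := exists_mem_stoppingCubes hm hk hxQt hxT
    exact hxP (Set.mem_biUnion ⟨hP, hle⟩ hx)

lemma Tkset_eq_empty (hm : 1 ≤ m) (hT : ConvexTree T Qt) (hk : Qt.1 < k) : Tkset T k = ∅ := by
  refine Set.eq_empty_of_forall_notMem fun x hx => hk.not_ge ?_
  obtain ⟨Q, ⟨hQT, rfl⟩, -⟩ := Set.mem_iUnion₂.1 hx
  exact fst_le_fst_of_dC_subset hm (hT.2.1 Q hQT)

lemma frontier_Tkset_subset (hm : 1 ≤ m) (hT : ConvexTree T Qt) (k : ℤ) :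
    frontier (Tkset T k) ⊆
      ⋃ P ∈ {P ∈ insert Qt (stoppingCubes T Qt) | k ≤ P.1}, frontier (dC P) := by
  rcases lt_or_ge Qt.1 k with hk | hk
  · simp [Tkset_eq_empty hm hT hk]
  rw [Tkset_eq_sdiff hm hT hk]
  refine (frontier_sdiff_subset _ _).trans (Set.union_subset ?_ ?_)
  · exact Set.subset_biUnion_of_mem (u := fun P => frontier (dC P)) ⟨Set.mem_insert _ _, hk⟩
  · refine (frontier_biUnion_subset (finite_stoppingCubes_ge hm T Qt k) dC).trans ?_
    exact Set.biUnion_subset_biUnion_left fun P hP => ⟨Set.mem_insert_of_mem _ hP.1, hP.2⟩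

lemma encard_frontier_Tkset_inter_grid_le (hm : 1 ≤ m) (hT : ConvexTree T Qt) (k : ℤ) :
    ((frontier (Tkset T k) ∩ grid m k).encard : ℝ≥0∞) ≤
      ∑' P : ↥(insert Qt (stoppingCubes T Qt)), ((gridBoundary k P.1).encard : ℝ≥0∞) := by
  have hsub : frontier (Tkset T k) ∩ grid m k ⊆
      ⋃ P ∈ insert Qt (stoppingCubes T Qt), gridBoundary k P := by
    rintro y ⟨hy, hgrid⟩
    obtain ⟨P, ⟨hP, hle⟩, hyP⟩ := Set.mem_iUnion₂.1 (frontier_Tkset_subset hm hT k hy)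
    exact Set.mem_biUnion hP ⟨hle, hyP, hgrid⟩
  refine (ENat.toENNReal_mono (Set.encard_le_encard hsub)).trans ?_
  simp only [← ENNReal.tsum_set_one]
  exact ENNReal.tsum_biUnion_le_tsum (fun _ => 1) _ _

end StoppingCubes

/-- Lemma (boundary counting for convex trees): the number of lattice points of `(2^k ℤ)^m`
on the topological boundary of `T_k`, counted as `∑' _ : ↥(·), 1` in `ℝ≥0∞`. -/
theorem statement10 (m : ℕ) (hm : 1 ≤ m) :
    ∃ C : ℝ≥0, ∀ (T : Set (ℤ × (Fin m → ℤ))) (Qt : ℤ × (Fin m → ℤ)), ConvexTree T Qt →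
      (∑' k : ℤ, (2:ℝ≥0∞)^((m:ℤ)*k) *
        ∑' _ : ↥(frontier (Tkset T k) ∩ {y : Fin m → ℝ | ∀ i, ∃ z : ℤ, y i = (2:ℝ)^k * z}),
          (1:ℝ≥0∞)) ≤
        C * volume (dC Qt) := by
  refine ⟨2 * (m * 2 ^ (m + 1)), fun T Qt hT => ?_⟩
  calc ∑' k : ℤ, (2 : ℝ≥0∞) ^ ((m : ℤ) * k) * ∑' _ : ↥(frontier (Tkset T k) ∩ grid m k), (1 : ℝ≥0∞)
      ≤ ∑' k : ℤ, ∑' P : ↥(insert Qt (stoppingCubes T Qt)),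
          (2 : ℝ≥0∞) ^ ((m : ℤ) * k) * (gridBoundary k P.1).encard := by
        refine ENNReal.tsum_le_tsum fun k => ?_
        rw [ENNReal.tsum_set_one, ENNReal.tsum_mul_left]
        gcongr
        exact encard_frontier_Tkset_inter_grid_le hm hT k
    _ = ∑' P : ↥(insert Qt (stoppingCubes T Qt)), ∑' k : ℤ,
          (2 : ℝ≥0∞) ^ ((m : ℤ) * k) * (gridBoundary k P.1).encard := ENNReal.tsum_comm
    _ ≤ ∑' P : ↥(insert Qt (stoppingCubes T Qt)), m * 2 ^ (m + 1) * volume (dC P.1) :=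
        ENNReal.tsum_le_tsum fun P => tsum_encard_gridBoundary_le P.1
    _ ≤ m * 2 ^ (m + 1) * (2 * volume (dC Qt)) := by
        rw [ENNReal.tsum_mul_left]
        gcongr
        exact tsum_volume_insert_stoppingCubes_le hm T Qt
    _ = _ := by
        push_cast
        ring

end SBL
end
end

section
/- Let m ≥ 2 be an integer and Δ > 1. There exists Δ' > 1, depending only on Δ and m, such that the following holds. Let Π be a real m×2m matrix such that Π_j Π^T is Δ-regular for every j ∈ 𝒞. Then the left and right m×m blocks P^0 and P^1 of Π = (P^0, P^1) are Δ-regular (in particular invertible), and, setting J to be the 2m×m matrix whose upper block is J^0 := (P^0)^{−1} and whose lower block is J^1 := −(P^1)^{−1}, the m×m matrices A_j := Π_j J are Δ'-regular for every j ∈ 𝒞. -/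
open MeasureTheory Matrix
open scoped ENNReal NNReal BigOperators

noncomputable section

namespace SBL

/-!
Write `A`, `B` for the blocks of `P` and `D` for the diagonal projection attached to a corner `j`.
Up to the signs of some rows, `A_j` is `D * A⁻¹ + (1 - D) * B⁻¹`, and by the Weinstein–Aronszajn
identity `det (1 + X * Y) = det (1 + Y * X)` its determinant is
`det (A * (1 - D) + B * D) / (det A * det B)`. The numerator is the determinant of `Π_{j'} Pᵀ` for
the opposite corner `j'`, which the hypothesis bounds below, and `|det A|, |det B| ≤ Δ ^ m`. The
norm of `A_j` is at most `‖A⁻¹‖ + ‖B⁻¹‖`, where `‖A⁻¹‖ ≤ |det A|⁻¹ * ‖A‖ ^ (m - 1)` by Hadamard's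
inequality in an orthonormal basis starting in the direction that `A` contracts most.
-/

section Hadamard

variable {E : Type*} [NormedAddCommGroup E] [InnerProductSpace ℝ E]

lemma abs_det_le_prod_norm_apply {ι : Type*} [Fintype ι] (b : OrthonormalBasis ι ℝ E)
    (f : E →ₗ[ℝ] E) : |f.det| ≤ ∏ i, ‖f (b i)‖ := by
  let e := b.reindex (Fintype.equivFin ι)
  have : Fact (Module.finrank ℝ E = Fintype.card ι) := ⟨Module.finrank_eq_card_basis b.toBasis⟩
  calc |f.det| = |e.toBasis.det (f ∘ e)| := by
        rw [← e.coe_toBasis, Module.Basis.det_comp, Module.Basis.det_self, mul_one]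
    _ = |e.toBasis.orientation.volumeForm (f ∘ e)| :=
        (Orientation.volumeForm_robust' _ e _).symm
    _ ≤ ∏ k, ‖f (e k)‖ := Orientation.abs_volumeForm_apply_le _ _
    _ = ∏ i, ‖f (b i)‖ := by
        simpa only [e, b.reindex_apply] using
          (Fintype.equivFin ι).symm.prod_comp fun i => ‖f (b i)‖

lemma exists_orthonormalBasis_apply_zero_eq_normalize {n : ℕ}
    (hn : Module.finrank ℝ E = n + 1) {x : E} (hx : x ≠ 0) :
    ∃ b : OrthonormalBasis (Fin (n + 1)) ℝ E, b 0 = ‖x‖⁻¹ • x := by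
  have : FiniteDimensional ℝ E := .of_finrank_eq_succ hn
  have hv : Pairwise fun i j : Fin (n + 1) =>
      inner ℝ (Pi.single (M := fun _ => E) 0 x i) (Pi.single (M := fun _ => E) 0 x j) = 0 := by
    intro i j hij
    rcases eq_or_ne i 0 with rfl | hi
    · simp [Pi.single_eq_of_ne hij.symm]
    · simp [Pi.single_eq_of_ne hi]
  refine ⟨InnerProductSpace.gramSchmidtOrthonormalBasis (hn.trans (Fintype.card_fin _).symm)
    (Pi.single 0 x), ?_⟩
  simpa using
    InnerProductSpace.gramSchmidtOrthonormalBasis_apply_of_orthogonal _ hv (i := 0) (by simpa)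

/-- The exponent is one less than in `|det f| ≤ ‖f‖ ^ dim E` because the direction of `x`, taken as
the first vector of an orthonormal basis, contributes `‖f x‖ / ‖x‖` to Hadamard's inequality. -/
lemma abs_det_mul_norm_le [FiniteDimensional ℝ E] (f : E →L[ℝ] E) (x : E) :
    |f.det| * ‖x‖ ≤ ‖f‖ ^ (Module.finrank ℝ E - 1) * ‖f x‖ := by
  rcases eq_or_ne x 0 with rfl | hx
  · simp
  have : Nontrivial E := ⟨x, 0, hx⟩
  obtain ⟨n, hn⟩ := Nat.exists_eq_add_one.2 (Module.finrank_pos (R := ℝ) (M := E))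
  obtain ⟨b, hb⟩ := exists_orthonormalBasis_apply_zero_eq_normalize hn hx
  have hunit (i : Fin (n + 1)) : ‖f (b i)‖ ≤ ‖f‖ := by
    simpa using f.le_opNorm (b i)
  have hdet : |f.det| ≤ ‖f‖ ^ n * (‖x‖⁻¹ * ‖f x‖) :=
    calc |f.det| ≤ ‖f (b 0)‖ * ∏ i : Fin n, ‖f (b i.succ)‖ := by
          rw [← Fin.prod_univ_succ fun i => ‖f (b i)‖]
          exact abs_det_le_prod_norm_apply b f
      _ ≤ ‖f (b 0)‖ * ∏ _i : Fin n, ‖f‖ := by gcongr with i; exact hunit _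
      _ = ‖f‖ ^ n * (‖x‖⁻¹ * ‖f x‖) := by simp [hb, norm_smul, mul_comm]
  calc |f.det| * ‖x‖ ≤ ‖f‖ ^ n * (‖x‖⁻¹ * ‖f x‖) * ‖x‖ := by gcongr
    _ = ‖f‖ ^ (Module.finrank ℝ E - 1) * ‖f x‖ := by
        have := norm_ne_zero_iff.2 hx
        rw [hn, Nat.add_sub_cancel]
        field_simp

end Hadamard

section MatrixNorm

open scoped Matrix.Norms.L2Operator

variable {ι κ : Type*} [Fintype ι] [Fintype κ] [DecidableEq κ]

lemma opNorm_eq_norm (A : Matrix ι κ ℝ) : opNorm A = ‖A‖ := rfl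

variable [DecidableEq ι]

lemma norm_transpose (A : Matrix ι κ ℝ) : ‖Aᵀ‖ = ‖A‖ := by
  rw [← conjTranspose_eq_transpose_of_trivial, l2_opNorm_conjTranspose]

lemma det_toEuclideanCLM (A : Matrix ι ι ℝ) :
    (toEuclideanCLM (𝕜 := ℝ) A).det = A.det := by
  rw [ContinuousLinearMap.det, coe_toEuclideanCLM_eq_toEuclideanLin,
    toEuclideanLin_eq_toLin_orthonormal, LinearMap.det_toLin]

lemma abs_det_le_norm_pow (A : Matrix ι ι ℝ) : |A.det| ≤ ‖A‖ ^ Fintype.card ι := by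
  have hunit (i : ι) : ‖toEuclideanCLM (𝕜 := ℝ) A (EuclideanSpace.basisFun ι ℝ i)‖ ≤ ‖A‖ := by
    simpa [l2_opNorm_toEuclideanCLM] using
      (toEuclideanCLM (𝕜 := ℝ) A).le_opNorm (EuclideanSpace.basisFun ι ℝ i)
  calc |A.det| ≤ ∏ i, ‖toEuclideanCLM (𝕜 := ℝ) A (EuclideanSpace.basisFun ι ℝ i)‖ := by
        rw [← det_toEuclideanCLM]
        exact abs_det_le_prod_norm_apply _ _
    _ ≤ ∏ _i : ι, ‖A‖ := by gcongr with i; exact hunit i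
    _ = ‖A‖ ^ Fintype.card ι := by simp

lemma norm_inv_le {A : Matrix ι ι ℝ} (hA : A.det ≠ 0) :
    ‖A⁻¹‖ ≤ |A.det|⁻¹ * ‖A‖ ^ (Fintype.card ι - 1) := by
  rw [← l2_opNorm_toEuclideanCLM]
  refine ContinuousLinearMap.opNorm_le_bound _ (by positivity) fun y => ?_
  have hy : toEuclideanCLM (𝕜 := ℝ) A (toEuclideanCLM (𝕜 := ℝ) A⁻¹ y) = y := by
    rw [← mul_apply_eq_comp, ← map_mul, mul_nonsing_inv A hA.isUnit, map_one,
      one_apply_eq_self]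
  have h := abs_det_mul_norm_le (toEuclideanCLM (𝕜 := ℝ) A) (toEuclideanCLM (𝕜 := ℝ) A⁻¹ y)
  rw [det_toEuclideanCLM, l2_opNorm_toEuclideanCLM, finrank_euclideanSpace, hy] at h
  rwa [mul_assoc, inv_mul_eq_div, le_div_iff₀' (abs_pos.2 hA)]

end MatrixNorm

/-- After factoring `B⁻¹` out on the right of the first matrix and `A` on the left of the second,
this is the Weinstein–Aronszajn identity for `D` and `A⁻¹ * B - 1`. -/
lemma det_mul_det_interpolate_inv_mul_det {n R : Type*} [Fintype n] [DecidableEq n] [CommRing R]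
    {A B : Matrix n n R} (hA : IsUnit A.det) (hB : IsUnit B.det) (D : Matrix n n R) :
    A.det * (D * A⁻¹ + (1 - D) * B⁻¹).det * B.det = (A * (1 - D) + B * D).det := by
  have hleft : (D * A⁻¹ + (1 - D) * B⁻¹) * B = 1 + D * (A⁻¹ * B - 1) := by
    rw [add_mul, mul_assoc, mul_assoc, nonsing_inv_mul B hB]
    noncomm_ring
  have hright : A * (1 - D) + B * D = A * (1 + (A⁻¹ * B - 1) * D) := by
    have hAB : A * (A⁻¹ * B) = B := mul_nonsing_inv_cancel_left A B hA
    rw [mul_add, sub_mul, mul_sub A (A⁻¹ * B * D), ← mul_assoc A (A⁻¹ * B) D, hAB]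
    noncomm_ring
  rw [mul_assoc, ← det_mul, hleft, det_one_add_mul_comm, ← det_mul, hright]

section Corner

variable {m : ℕ}

/-- The diagonal projection of `ℝ^m` onto the coordinates where the corner `j` selects the upper
block; the opposite corner `1 - j` gives the complementary projection. -/
def cornerDiag (j : Corner m) : Matrix (Fin m) (Fin m) ℝ :=
  diagonal fun i => if j i = 0 then 1 else 0

lemma cornerDiag_one_sub (j : Corner m) : cornerDiag (1 - j) = 1 - cornerDiag j := by
  rw [cornerDiag, cornerDiag, ← diagonal_one, diagonal_sub]
  congr 1 with i
  obtain h | h : j i = 0 ∨ j i = 1 := by omega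
  all_goals simp [h]

lemma Amat_eq_cornerDiag_mul_add (J : Matrix (Idx m) (Fin m) ℝ) (j : Corner m) :
    Amat J j = cornerDiag j * Jb0 J + (1 - cornerDiag j) * Jb1 J := by
  rw [sub_mul, one_mul]
  ext i k
  by_cases h : j i = 0 <;> simp [Amat, sel, cornerDiag, Jb0, Jb1, h]

lemma projM_mul_eq_Amat (j : Corner m) (J : Matrix (Idx m) (Fin m) ℝ) : projM j * J = Amat J j := by
  ext i k
  simp [projM, Amat, mul_apply]

open scoped Matrix.Norms.L2Operator in
lemma opNorm_Amat_le (J : Matrix (Idx m) (Fin m) ℝ) (j : Corner m) :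
    opNorm (Amat J j) ≤ opNorm (Jb0 J) + opNorm (Jb1 J) := by
  have hcorner (j : Corner m) : ‖cornerDiag j‖ ≤ 1 := by
    rw [cornerDiag, l2_opNorm_diagonal, pi_norm_le_iff_of_nonneg zero_le_one]
    intro i
    split_ifs <;> simp
  have hmul (j : Corner m) (X : Matrix (Fin m) (Fin m) ℝ) : ‖cornerDiag j * X‖ ≤ ‖X‖ :=
    (l2_opNorm_mul _ _).trans (mul_le_of_le_one_left (norm_nonneg _) (hcorner j))
  simp only [opNorm_eq_norm]
  rw [Amat_eq_cornerDiag_mul_add, ← cornerDiag_one_sub]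
  exact (norm_add_le _ _).trans (add_le_add (hmul _ _) (hmul _ _))

lemma abs_det_Amat_fromRows_neg (X Y : Matrix (Fin m) (Fin m) ℝ) (j : Corner m) :
    |(Amat (fromRows X (-Y)) j).det| = |(Amat (fromRows X Y) j).det| := by
  have hsign : Amat (fromRows X (-Y)) j =
      diagonal (fun i => if j i = 0 then 1 else -1) * Amat (fromRows X Y) j := by
    ext i k
    by_cases h : j i = 0 <;> simp [Amat, sel, h]
  rw [hsign, det_mul, abs_mul, det_diagonal, Finset.abs_prod,
    Finset.prod_eq_one fun i _ => by split_ifs <;> simp, one_mul]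

lemma det_mul_det_Amat_inv_mul_det (P : Matrix (Fin m) (Idx m) ℝ)
    (h₀ : IsUnit (P.submatrix id Sum.inl).det) (h₁ : IsUnit (P.submatrix id Sum.inr).det)
    (j : Corner m) :
    (P.submatrix id Sum.inl).det *
        (Amat (fromRows (P.submatrix id Sum.inl)⁻¹ (P.submatrix id Sum.inr)⁻¹) j).det *
        (P.submatrix id Sum.inr).det =
      (Amat Pᵀ (1 - j)).det := by
  have hcolumns : (Amat Pᵀ (1 - j))ᵀ = P.submatrix id Sum.inl * (1 - cornerDiag j) +
      P.submatrix id Sum.inr * cornerDiag j := by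
    have hsymm (j : Corner m) : (cornerDiag j)ᵀ = cornerDiag j := diagonal_transpose _
    rw [Amat_eq_cornerDiag_mul_add, ← cornerDiag_one_sub (1 - j), sub_sub_cancel,
      ← cornerDiag_one_sub, transpose_add, transpose_mul, transpose_mul, hsymm, hsymm]
    rfl
  rw [← det_transpose (Amat Pᵀ _), hcolumns, ← det_mul_det_interpolate_inv_mul_det h₀ h₁,
    Amat_eq_cornerDiag_mul_add]
  rfl

end Corner

namespace IsReg

open scoped Matrix.Norms.L2Operator

variable {m : ℕ} {Δ : ℝ} {A : Matrix (Fin m) (Fin m) ℝ}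

lemma of_transpose (hA : IsReg Δ Aᵀ) : IsReg Δ A := by
  simpa only [IsReg, opNorm_eq_norm, norm_transpose, det_transpose] using hA

lemma abs_det_le (hA : IsReg Δ A) : |A.det| ≤ Δ ^ m := by
  have h := abs_det_le_norm_pow A
  rw [Fintype.card_fin] at h
  exact h.trans (pow_le_pow_left₀ (norm_nonneg _) hA.1 m)

lemma opNorm_inv_le (hA : IsReg Δ A) : opNorm A⁻¹ ≤ Δ * Δ ^ (m - 1) := by
  have h := norm_inv_le hA.2.1
  rw [Fintype.card_fin] at h
  refine h.trans (mul_le_mul hA.2.2 ?_ (by positivity) ((norm_nonneg _).trans hA.1))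
  exact pow_le_pow_left₀ (norm_nonneg _) hA.1 _

lemma Amat_fromRows_inv (hΔ : 1 ≤ Δ) {P : Matrix (Fin m) (Idx m) ℝ}
    (h₀ : IsReg Δ (P.submatrix id Sum.inl)) (h₁ : IsReg Δ (P.submatrix id Sum.inr))
    {j : Corner m} (hopp : IsReg Δ (Amat Pᵀ (1 - j))) :
    IsReg (2 * Δ ^ (2 * m + 1))
      (Amat (fromRows (P.submatrix id Sum.inl)⁻¹ (-(P.submatrix id Sum.inr)⁻¹)) j) := by
  have hdet := congrArg abs (det_mul_det_Amat_inv_mul_det P h₀.2.1.isUnit h₁.2.1.isUnit j)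
  rw [abs_mul, abs_mul, ← abs_det_Amat_fromRows_neg] at hdet
  set P₀ := P.submatrix id Sum.inl
  set P₁ := P.submatrix id Sum.inr
  set A := Amat (fromRows P₀⁻¹ (-P₁⁻¹)) j
  have hA : A.det ≠ 0 := by
    intro hzero
    rw [hzero, abs_zero, mul_zero, zero_mul] at hdet
    exact hopp.2.1 (abs_eq_zero.1 hdet.symm)
  refine ⟨?_, hA, ?_⟩
  · calc opNorm A ≤ opNorm P₀⁻¹ + opNorm (-P₁⁻¹) := opNorm_Amat_le _ j
      _ = opNorm P₀⁻¹ + opNorm P₁⁻¹ := by simp only [opNorm_eq_norm, norm_neg]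
      _ ≤ Δ * Δ ^ (m - 1) + Δ * Δ ^ (m - 1) := add_le_add h₀.opNorm_inv_le h₁.opNorm_inv_le
      _ = 2 * Δ ^ (m - 1 + 1) := by ring
      _ ≤ 2 * Δ ^ (2 * m + 1) := by gcongr; omega
  · calc |A.det|⁻¹ = |P₀.det| * |P₁.det| * |(Amat Pᵀ (1 - j)).det|⁻¹ := by
          have := abs_ne_zero.2 hA
          have := abs_ne_zero.2 h₀.2.1
          have := abs_ne_zero.2 h₁.2.1
          rw [← hdet]
          field_simp
      _ ≤ Δ ^ m * Δ ^ m * Δ := by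
          gcongr
          exacts [h₀.abs_det_le, h₁.abs_det_le, hopp.2.2]
      _ = Δ ^ (2 * m + 1) := by ring
      _ ≤ 2 * Δ ^ (2 * m + 1) := le_mul_of_one_le_left (by positivity) one_le_two

end IsReg

/-- Reduction lemma from Section 2: regularity of the blocks of `Π` and of the
matrices `A_j = Π_j J` for `J = ((P^0)⁻¹, −(P^1)⁻¹)` stacked vertically. -/
theorem statement11 (m : ℕ) (hm : 2 ≤ m) (Δ : ℝ) (hΔ : 1 < Δ) :
    ∃ Δ' : ℝ, 1 < Δ' ∧ ∀ P : Matrix (Fin m) (Idx m) ℝ,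
      (∀ j : Corner m, IsReg Δ (projM j * P.transpose)) →
      IsReg Δ (P.submatrix id Sum.inl) ∧ IsReg Δ (P.submatrix id Sum.inr) ∧
      ∀ j : Corner m,
        IsReg Δ' (Amat (Matrix.fromRows (P.submatrix id Sum.inl)⁻¹
          (-(P.submatrix id Sum.inr)⁻¹)) j) := by
  have hpow : 1 ≤ Δ ^ (2 * m + 1) := one_le_pow₀ hΔ.le
  refine ⟨2 * Δ ^ (2 * m + 1), by linarith, fun P hP => ?_⟩
  simp only [projM_mul_eq_Amat] at hP
  have h₀ : IsReg Δ (P.submatrix id Sum.inl) := (hP 0).of_transpose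
  have h₁ : IsReg Δ (P.submatrix id Sum.inr) := (hP 1).of_transpose
  exact ⟨h₀, h₁, fun j => h₀.Amat_fromRows_inv hΔ.le h₁ (hP (1 - j))⟩

end SBL
end
end

section
/- Let m ≥ 2 and 0 < l ≤ m be integers. Let J be a real 2m×m matrix whose blocks J^0, J^1 are invertible, whose rows satisfy J^0_h = J^1_h for 1 ≤ h ≤ l, and such that Π_j Π^T is invertible for every j ∈ 𝒞, where Π := Π^J. Then: (i) Π^T maps the subspace (I−Θ̃)ℝ^m into (I−Θ)ℝ^{2m}; (ii) for every j ∈ 𝒞, the map Π_j Π^T maps (I−Θ̃)ℝ^m onto itself; (iii) Θ Π^T Θ̃ = Θ Π^T. -/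
open MeasureTheory Matrix
open scoped ENNReal NNReal BigOperators

noncomputable section

/-!
Multiplying `J^0 (J^1)⁻¹` on the left by `1 - Θ̃` gives `1 - Θ̃`, because `J^0` and `J^1` share
the rows that `1 - Θ̃` keeps. Hence `Π^T (1 - Θ̃)` has the blocks `1 - Θ̃` and `-(1 - Θ̃)`, both
killed by `Θ̃`; this is (iii), and (i) is the same identity read on vectors. Since
`Θ̃ Π_j = Π_j Θ`, the matrix `Π_j Π^T` then preserves the range of `1 - Θ̃`. An invertible map
preserving a subspace maps it onto itself, which is (ii).
-/

namespace SBL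

/- `f` induces a surjective, hence injective, endomorphism of `M ⧸ V`, so `f x ∈ V` forces
`x ∈ V`. -/
lemma map_eq_self_of_map_le {R M : Type*} [Ring R] [OrzechProperty R] [AddCommGroup M] [Module R M]
    [Module.Finite R M] {f : M →ₗ[R] M} (hf : Function.Surjective f) {V : Submodule R M}
    (hV : V.map f ≤ V) : V.map f = V := by
  have hle : V ≤ V.comap f := Submodule.map_le_iff_le_comap.1 hV
  have hsurj : Function.Surjective (V.mapQ V f hle) := by
    rw [← LinearMap.range_eq_top, Submodule.range_mapQ, LinearMap.range_eq_top.2 hf,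
      Submodule.map_top, Submodule.range_mkQ]
  have hinj := OrzechProperty.injective_of_surjective_endomorphism _ hsurj
  refine hV.antisymm fun v hv => ?_
  obtain ⟨x, rfl⟩ := hf v
  have hx : V.mapQ V f hle (V.mkQ x) = 0 := by simpa using hv
  exact ⟨x, by simpa using (map_eq_zero_iff _ hinj).1 hx, rfl⟩

section Matrix

variable {R m n : Type*} [Fintype n] [DecidableEq n]

lemma mapsTo_range_one_sub_mulVec [Ring R] [Fintype m] [DecidableEq m] {A : Matrix m n R}
    {P : Matrix n n R} {Q : Matrix m m R} (h : Q * A * P = Q * A) :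
    Set.MapsTo A.mulVec (Set.range (1 - P).mulVec) (Set.range (1 - Q).mulVec) := by
  have hA : (1 - Q) * (A * (1 - P)) = A * (1 - P) := by
    rw [Matrix.sub_mul, Matrix.one_mul, ← Matrix.mul_assoc, Matrix.mul_sub (Q * A), h,
      Matrix.mul_one, sub_self, sub_zero]
  rintro _ ⟨ξ, rfl⟩
  exact ⟨(A * (1 - P)) *ᵥ ξ, by rw [mulVec_mulVec, hA, mulVec_mulVec]⟩

variable [CommRing R]

lemma image_mulVec_range_eq_self [Fintype m] {A : Matrix n n R} {B : Matrix n m R}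
    (hA : IsUnit A.det)
    (h : Set.MapsTo A.mulVec (Set.range B.mulVec) (Set.range B.mulVec)) :
    A.mulVec '' Set.range B.mulVec = Set.range B.mulVec := by
  have hsurj : Function.Surjective A.mulVecLin :=
    mulVec_surjective_iff_isUnit.2 ((isUnit_iff_isUnit_det A).2 hA)
  have hle : (LinearMap.range B.mulVecLin).map A.mulVecLin ≤ LinearMap.range B.mulVecLin :=
    Set.image_subset_iff.2 h
  exact congrArg SetLike.coe (map_eq_self_of_map_le hsurj hle)

/-- The matrix `Π^J` of a block column `J` with upper block `J₀` and lower block `J₁`, over any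
commutative ring. It satisfies `Π^J J = 0` when `J₁` is invertible; otherwise `J₁⁻¹` is the junk
value `0`. -/
def blockAnnihilator (J₀ J₁ : Matrix n n R) : Matrix n (n ⊕ n) R :=
  fromCols 1 (-(J₀ * J₁⁻¹))

lemma mul_blockAnnihilator {N : Matrix m n R} {J₀ J₁ : Matrix n n R} (hJ₁ : IsUnit J₁.det)
    (hN : N * J₀ = N * J₁) :
    N * blockAnnihilator J₀ J₁ = fromCols N (-N) := by
  rw [blockAnnihilator, mul_fromCols, Matrix.mul_one, Matrix.mul_neg, ← Matrix.mul_assoc, hN,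
    mul_nonsing_inv_cancel_right _ _ hJ₁]

lemma fromBlocks_mul_transpose_blockAnnihilator_mul {P J₀ J₁ : Matrix n n R}
    (hP : IsIdempotentElem P) (hJ₁ : IsUnit J₁.det) (hJ : (1 - P)ᵀ * J₀ = (1 - P)ᵀ * J₁) :
    fromBlocks P 0 0 P * (blockAnnihilator J₀ J₁)ᵀ * P =
      fromBlocks P 0 0 P * (blockAnnihilator J₀ J₁)ᵀ := by
  have hblocks : (blockAnnihilator J₀ J₁)ᵀ * (1 - P) = fromRows (1 - P) (-(1 - P)) := by
    simpa [transpose_mul, transpose_fromCols] using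
      congrArg transpose (mul_blockAnnihilator hJ₁ hJ)
  have hkill : fromBlocks P 0 0 P * fromRows (1 - P) (-(1 - P)) = 0 := by
    simp [-neg_sub, fromBlocks_mul_fromRows, hP.mul_one_sub_self]
  rw [← hblocks, ← Matrix.mul_assoc, Matrix.mul_sub, Matrix.mul_one, sub_eq_zero] at hkill
  exact hkill.symm

/-- `P` stands for `Θ̃` and `S` for `Π_j`; `hJ` says that `J₀` and `J₁` share the rows that `1 - P`
keeps. -/
theorem statement12_general {P J₀ J₁ : Matrix n n R} (hP : IsIdempotentElem P)
    (hJ₁ : IsUnit J₁.det) (hJ : (1 - P)ᵀ * J₀ = (1 - P)ᵀ * J₁) :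
    (∀ ξ : n → R, (blockAnnihilator J₀ J₁)ᵀ *ᵥ ((1 - P) *ᵥ ξ) ∈
      Set.range (1 - fromBlocks P 0 0 P).mulVec) ∧
    (∀ S : Matrix n (n ⊕ n) R, P * S = S * fromBlocks P 0 0 P →
      IsUnit (S * (blockAnnihilator J₀ J₁)ᵀ).det →
      (S * (blockAnnihilator J₀ J₁)ᵀ).mulVec '' Set.range (1 - P).mulVec =
        Set.range (1 - P).mulVec) ∧
    fromBlocks P 0 0 P * (blockAnnihilator J₀ J₁)ᵀ * P =
      fromBlocks P 0 0 P * (blockAnnihilator J₀ J₁)ᵀ := by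
  have hiii := fromBlocks_mul_transpose_blockAnnihilator_mul hP hJ₁ hJ
  refine ⟨fun ξ => mapsTo_range_one_sub_mulVec hiii ⟨ξ, rfl⟩, fun S hS hdet => ?_, hiii⟩
  refine image_mulVec_range_eq_self hdet (mapsTo_range_one_sub_mulVec ?_)
  rw [← Matrix.mul_assoc, hS, Matrix.mul_assoc S, Matrix.mul_assoc S, hiii]

end Matrix

lemma isIdempotentElem_Th {m : ℕ} (l : ℕ) : IsIdempotentElem (Th (m := m) l) := by
  simp [IsIdempotentElem, Th]

lemma ThB_eq_fromBlocks {m : ℕ} (l : ℕ) : ThB (m := m) l = fromBlocks (Th l) 0 0 (Th l) :=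
  (fromBlocks_diagonal _ _).symm

lemma Th_mul_projM {m : ℕ} (l : ℕ) (j : Corner m) :
    Th (m := m) l * projM j = projM j * ThB (m := m) l := by
  ext i k
  rw [Th, ThB, diagonal_mul, mul_diagonal]
  by_cases hk : k = sel j i
  · by_cases hj : j i = 0 <;> simp [projM, hk, sel, hj]
  · simp [projM, hk]

lemma one_sub_Th_transpose_mul_Jb0_eq_mul_Jb1 {m l : ℕ} {J : Matrix (Idx m) (Fin m) ℝ}
    (hrows : ∀ h : Fin m, (h : ℕ) < l → ∀ k, J (Sum.inl h) k = J (Sum.inr h) k) :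
    (1 - Th (m := m) l)ᵀ * Jb0 J = (1 - Th (m := m) l)ᵀ * Jb1 J := by
  ext h k
  by_cases hh : (h : ℕ) < l <;> simp [Th, Jb0, Jb1, Matrix.sub_mul, hh, hrows]

/-- Lemma 5.1 (structure of `Π^T` relative to the reflection symmetry subspaces). -/
theorem statement12 (m l : ℕ) (hm : 2 ≤ m) (hl0 : 0 < l) (hlm : l ≤ m)
    (J : Matrix (Idx m) (Fin m) ℝ)
    (h0 : IsUnit (Jb0 J).det) (h1 : IsUnit (Jb1 J).det)
    (hrows : ∀ h : Fin m, (h:ℕ) < l → ∀ k, J (Sum.inl h) k = J (Sum.inr h) k)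
    (hreg : ∀ j : Corner m, IsUnit (projM j * (PiJ J).transpose).det) :
    (∀ ξ : Fin m → ℝ,
      (PiJ J).transpose.mulVec (((1 : Matrix (Fin m) (Fin m) ℝ) - Th l).mulVec ξ) ∈
        Set.range ((1 : Matrix (Idx m) (Idx m) ℝ) - ThB l).mulVec) ∧
    (∀ j : Corner m,
      (fun ξ => (projM j * (PiJ J).transpose).mulVec ξ) ''
          Set.range ((1 : Matrix (Fin m) (Fin m) ℝ) - Th l).mulVec =
        Set.range ((1 : Matrix (Fin m) (Fin m) ℝ) - Th l).mulVec) ∧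
    ThB (m := m) l * (PiJ J).transpose * Th l = ThB l * (PiJ J).transpose := by
  rw [ThB_eq_fromBlocks]
  obtain ⟨hi, hii, hiii⟩ :=
    statement12_general (isIdempotentElem_Th l) h1 (one_sub_Th_transpose_mul_Jb0_eq_mul_Jb1 hrows)
  exact ⟨hi, fun j => hii _ (ThB_eq_fromBlocks l ▸ Th_mul_projM l j) (hreg j), hiii⟩

end SBL
end
end
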